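/- arXiv:2605.17567 — 3 statements merged into one kernel-verified Lean document; each statement's English description precedes it below -/
import Mathlib

section
/- Suppose the integers a, b, c, d satisfy d > c > b > a ≥ 2, they are pairwise coprime, and 1/a + 1/b + 1/c + 1/d = 1 + 1/(a·b·c·d) (as rational numbers). Then (a,b,c,d) = (2,3,7,41) or (a,b,c,d) = (2,3,11,13). -/
/-!
Clearing denominators turns the equation into `bcd + acd + abd + abc = abcd + 1`, so the reciprocals
sum to more than `1`. As `1/3 + 1/4 + 1/5 + 1/6 < 1`, this forces `a = 2`; then
`1/b + 1/c + 1/d > 1/2` forces `b ≤ 5`. Coprimality with `2` excludes `b = 4`, and for `b = 5` it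
gives `c ≥ 7`, which is too large. So `b = 3`, and the equation becomes `(c - 6) (d - 6) = 35`,
whose solutions with `3 < c < d` are `(7, 41)` and `(11, 13)`.
-/

theorem stmt_0 (a b c d : ℤ) (ha : 2 ≤ a) (hab : a < b) (hbc : b < c) (hcd : c < d)
    (hab' : Int.gcd a b = 1) (hac : Int.gcd a c = 1) (had : Int.gcd a d = 1)
    (hbc' : Int.gcd b c = 1) (hbd : Int.gcd b d = 1) (hcd' : Int.gcd c d = 1)
    (heq : (1 : ℚ) / (a : ℚ) + 1 / (b : ℚ) + 1 / (c : ℚ) + 1 / (d : ℚ)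
      = 1 + 1 / ((a : ℚ) * b * c * d)) :
    (a = 2 ∧ b = 3 ∧ c = 7 ∧ d = 41) ∨ (a = 2 ∧ b = 3 ∧ c = 11 ∧ d = 13) := by
  have key : b * c * d + a * c * d + a * b * d + a * b * c = a * b * c * d + 1 := by
    have h1 : (a : ℚ) ≠ 0 := by exact_mod_cast (by lia : a ≠ 0)
    have h2 : (b : ℚ) ≠ 0 := by exact_mod_cast (by lia : b ≠ 0)
    have h3 : (c : ℚ) ≠ 0 := by exact_mod_cast (by lia : c ≠ 0)
    have h4 : (d : ℚ) ≠ 0 := by exact_mod_cast (by lia : d ≠ 0)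
    field_simp at heq
    have h : (b * c * d + a * c * d + a * b * d + a * b * c : ℚ) = a * b * c * d + 1 := by
      linarith
    exact_mod_cast h
  have pcd : 0 < c * d := mul_pos (by lia) (by lia)
  have pbd : 0 < b * d := mul_pos (by lia) (by lia)
  have pbc : 0 < b * c := mul_pos (by lia) (by lia)
  have pbcd : 0 < b * (c * d) := mul_pos (by lia) pcd
  -- Lower bounds on `b`, `c`, `d` bound each term of `key` by a multiple of `b * c * d`.
  have bound : ∀ x y z : ℤ, x ≤ b → y ≤ c → z ≤ d →
      x * (c * d) ≤ b * (c * d) ∧ y * (b * d) ≤ b * (c * d) ∧ z * (b * c) ≤ b * (c * d) := by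
    intro x y z hx hy hz
    refine ⟨mul_le_mul_of_nonneg_right hx pcd.le, ?_, ?_⟩
    · linarith [mul_le_mul_of_nonneg_right hy pbd.le]
    · linarith [mul_le_mul_of_nonneg_right hz pbc.le]
  have ha4 : a < 4 := by
    by_contra! h
    obtain ⟨h1, h2, h3⟩ := bound a a a (by lia) (by lia) (by lia)
    have h4 := mul_le_mul_of_nonneg_right h pbcd.le
    linarith
  obtain rfl : a = 2 := by
    by_contra h
    obtain rfl : a = 3 := by lia
    obtain ⟨h1, h2, h3⟩ := bound 4 5 6 (by lia) (by lia) (by lia)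
    linarith
  have hb6 : b < 6 := by
    by_contra! h
    obtain ⟨h1, h2, h3⟩ := bound 6 7 8 (by lia) (by lia) (by lia)
    linarith
  have hb : b = 3 ∨ b = 4 ∨ b = 5 := by lia
  rcases hb with rfl | rfl | rfl
  · have h35 : (c - 6) * (d - 6) = 35 := by linarith
    have hc : c < 12 := by
      by_contra! h
      nlinarith
    interval_cases c <;> lia
  · exact absurd hab' (by decide)
  · have hc6 : c ≠ 6 := by
      rintro rfl
      exact absurd hac (by decide)
    obtain ⟨h1, h2, h3⟩ := bound 5 7 8 (by lia) (by lia) (by lia)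
    linarith
end

section
/- Suppose a, b, u, v are integers with a = 2, b > 2, u, v ≥ 2, and v·a·b − 1 = (uv−1)·(ab − a − b). Then (v·(u−2) − 1)·b = 2uv − 3. Consequently, if u > 6 then b < 3, and if u = 6 then b = 3. -/
theorem stmt_11 (a b u v : ℤ) (ha : a = 2) (hb : 2 < b) (hu : 2 ≤ u) (hv : 2 ≤ v)
    (h : v * a * b - 1 = (u * v - 1) * (a * b - a - b)) :
    (v * (u - 2) - 1) * b = 2 * u * v - 3 ∧ (6 < u → b < 3) ∧ (u = 6 → b = 3) := by
  subst ha
  have key : (v * (u - 2) - 1) * b = 2 * u * v - 3 := by linear_combination -h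
  refine ⟨key, fun h6 => ?_, fun h6 => ?_⟩
  · by_contra! hb3
    have hpos : 0 ≤ v * (u - 2) - 1 := by nlinarith
    -- Replacing `b` by `3` in `key` leaves `u * v ≤ 6 * v`, which contradicts `6 < u`.
    have hle : (v * (u - 2) - 1) * 3 ≤ (v * (u - 2) - 1) * b :=
      mul_le_mul_of_nonneg_left hb3 hpos
    have hlt : 0 < v * (u - 6) := mul_pos (by linarith) (by linarith)
    linarith
  · subst h6
    -- Here `key` reads `(4 * v - 1) * b = 3 * (4 * v - 1)`.
    have hne : 4 * v - 1 ≠ 0 := by omega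
    exact mul_left_cancel₀ hne (by linear_combination key)
end

section
/- Call a quadruple of integers (a,b,u,v), with b > a ≥ 2 and u,v ≥ 2, admissible if: (1) a, b and uv−1 are pairwise coprime; (2) 1/a + 1/b + v/(uv−1) > 1 as rational numbers; (3) v·a·b − 1 = (uv−1)·(ab − a − b). The admissible quadruples with u = 2 are exactly (a,b,v) ∈ {(3,14,3), (3,10,4), (3,8,6), (3,7,10), (4,11,2), (4,5,5), (5,7,2)}; equivalently, the corresponding triples (a, b, 2v−1) are (3,14,5), (3,10,7), (3,8,11), (3,7,19), (4,11,3), (4,5,9), (5,7,3). -/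
/-!
With `u = 2` the identity `vab - 1 = (2v - 1)(ab - a - b)` is equivalent to
`(v - 1)ab + 1 = (2v - 1)(a + b)`, which alone has only finitely many solutions with
`b > a ≥ 2` and `v ≥ 2`. Comparing sizes gives `3 ≤ a ≤ 5`, and for each such `a` the equation
factors: `(v - 2)(b - 6) = 8` for `a = 3`, `(2v - 3)(b - 4) = 7` for `a = 4`, and
`(3v - 4)(3b - 10) = 22` for `a = 5`. Hence `b` is bounded and the solutions can be listed.
Conversely, each listed triple satisfies all the conditions by direct computation.
-/

/-- A quadruple of integers `(a,b,u,v)` with `b > a ≥ 2` and `u,v ≥ 2` is *admissible* if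
`a`, `b` and `uv - 1` are pairwise coprime, `1/a + 1/b + v/(uv-1) > 1` as rational numbers,
and `vab - 1 = (uv-1)(ab - a - b)`. -/
def Admissible (a b u v : ℤ) : Prop :=
  2 ≤ a ∧ a < b ∧ 2 ≤ u ∧ 2 ≤ v ∧
  Int.gcd a b = 1 ∧ Int.gcd a (u * v - 1) = 1 ∧ Int.gcd b (u * v - 1) = 1 ∧
  (1 : ℚ) / (a : ℚ) + 1 / (b : ℚ) + (v : ℚ) / ((u : ℚ) * v - 1) > 1 ∧
  v * a * b - 1 = (u * v - 1) * (a * b - a - b)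

theorem stmt_17 (a b v : ℤ) :
    Admissible a b 2 v ↔
      ((a = 3 ∧ b = 14 ∧ v = 3) ∨ (a = 3 ∧ b = 10 ∧ v = 4) ∨ (a = 3 ∧ b = 8 ∧ v = 6) ∨
        (a = 3 ∧ b = 7 ∧ v = 10) ∨ (a = 4 ∧ b = 11 ∧ v = 2) ∨ (a = 4 ∧ b = 5 ∧ v = 5) ∨
        (a = 5 ∧ b = 7 ∧ v = 2)) := by
  constructor
  · rintro ⟨ha, hab, -, hv, -, -, -, -, h⟩
    have h' : (v - 1) * (a * b) + 1 = (2 * v - 1) * (a + b) := by linear_combination -h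
    -- For `a ≥ 6` the left side is at least `6(v - 1)b + 1`, while `a + b ≤ 2b - 1`.
    have ha5 : a ≤ 5 := by
      by_contra! hc
      have h1 : (v - 1) * (6 * b) ≤ (v - 1) * (a * b) :=
        mul_le_mul_of_nonneg_left (mul_le_mul_of_nonneg_right (by lia) (by lia)) (by lia)
      have h2 : (2 * v - 1) * (a + b) ≤ (2 * v - 1) * (2 * b - 1) :=
        mul_le_mul_of_nonneg_left (by lia) (by lia)
      nlinarith [mul_nonneg (sub_nonneg.2 hv) (by lia : (0 : ℤ) ≤ b)]
    interval_cases a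
    · lia
    · have hf : (v - 2) * (b - 6) = 8 := by linear_combination h'
      have hv3 : 1 ≤ v - 2 := by
        rcases eq_or_lt_of_le hv with rfl | hlt
        · lia
        · lia
      have hb : b ≤ 14 := by nlinarith
      interval_cases b <;> lia
    · have hf : (2 * v - 3) * (b - 4) = 7 := by linear_combination h'
      have hb : b ≤ 11 := by nlinarith
      interval_cases b <;> lia
    · have hf : (3 * v - 4) * (3 * b - 10) = 22 := by linear_combination 3 * h'
      have hb : b ≤ 7 := by nlinarith
      interval_cases b <;> lia
  · rintro (⟨rfl, rfl, rfl⟩ | ⟨rfl, rfl, rfl⟩ | ⟨rfl, rfl, rfl⟩ | ⟨rfl, rfl, rfl⟩ |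
      ⟨rfl, rfl, rfl⟩ | ⟨rfl, rfl, rfl⟩ | ⟨rfl, rfl, rfl⟩) <;>
    norm_num [Admissible]
end
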